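/- arXiv:1401.7302 — 2 statements merged into one kernel-verified Lean document; each statement's English description precedes it below -/
import Mathlib

section
/- Let V be a symplectic vector space, C a coisotropic subspace of V, and L₁, L₂ Lagrangian subspaces of V. Then the Chow distance between the reductions satisfies d(L₁^C, L₂^C) ≤ d(L₁, L₂); concretely, with Λᵢ := (Lᵢ ∩ C) + Cᗮ, one has (dim Λ₁ − dim(Λ₁ ∩ Λ₂)) ≤ (dim L₁ − dim(L₁ ∩ L₂)). -/
/-!
Reduction `L ↦ (L ⊓ C) ⊔ D`, with `D = Cᗮ`, is a meet followed by a join, and neither increases the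
distance. Indeed `d(A, B) = dim (A / (A ⊓ B))` can only grow with `A` and shrink with `B`, while
intersecting `B` with some `C ≥ A` or enlarging `A` by some `D ≤ B` leaves it unchanged. Hence
`d(A ⊓ C, B ⊓ C) = d(A ⊓ C, B) ≤ d(A, B)` and `d(A ⊔ D, B ⊔ D) = d(A, B ⊔ D) ≤ d(A, B)`.
-/

open Module

section ChowDist

variable {K V : Type*} [DivisionRing K] [AddCommGroup V] [Module K V]
  {A A' B B' C D : Submodule K V}

/-- The Chow distance `dim A - dim (A ⊓ B)` between subspaces, with values in `ℤ` so that the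
subtraction is not truncated. It is symmetric only for subspaces of equal dimension, and it is
meaningful when `A` is finite-dimensional, since `finrank` is `0` on infinite-dimensional spaces. -/
noncomputable def chowDist (A B : Submodule K V) : ℤ :=
  (finrank K A : ℤ) - finrank K ↥(A ⊓ B)

theorem chowDist_mono_left [FiniteDimensional K A'] (h : A ≤ A') :
    chowDist A B ≤ chowDist A' B := by
  have : FiniteDimensional K A := Submodule.finiteDimensional_of_le h
  have h_sup : finrank K ↥(A ⊔ A' ⊓ B) ≤ finrank K A' :=
    Submodule.finrank_mono (sup_le h inf_le_left)
  have h_dim := Submodule.finrank_sup_add_finrank_inf_eq A (A' ⊓ B)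
  rw [← inf_assoc, inf_eq_left.mpr h] at h_dim
  unfold chowDist
  lia

theorem chowDist_anti_right [FiniteDimensional K A] (h : B ≤ B') :
    chowDist A B' ≤ chowDist A B := by
  have h_inf : finrank K ↥(A ⊓ B) ≤ finrank K ↥(A ⊓ B') :=
    Submodule.finrank_mono (inf_le_inf_left A h)
  unfold chowDist
  lia

theorem chowDist_inf_right_of_le (h : A ≤ C) : chowDist A (B ⊓ C) = chowDist A B := by
  rw [chowDist, chowDist, inf_left_comm, inf_eq_left.mpr h, inf_comm]

theorem chowDist_sup_left_of_le [FiniteDimensional K A] [FiniteDimensional K D] (h : D ≤ B) :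
    chowDist (A ⊔ D) B = chowDist A B := by
  have h_modular : (A ⊔ D) ⊓ B = A ⊓ B ⊔ D := by
    rw [sup_comm, sup_inf_assoc_of_le A h, sup_comm]
  have h_dim := Submodule.finrank_sup_add_finrank_inf_eq A D
  have h_dim_inf := Submodule.finrank_sup_add_finrank_inf_eq (A ⊓ B) D
  rw [inf_assoc, inf_eq_right.mpr h] at h_dim_inf
  rw [chowDist, chowDist, h_modular]
  lia

theorem chowDist_inf_inf_le (A B C : Submodule K V) [FiniteDimensional K A] :
    chowDist (A ⊓ C) (B ⊓ C) ≤ chowDist A B :=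
  calc chowDist (A ⊓ C) (B ⊓ C)
    _ = chowDist (A ⊓ C) B := chowDist_inf_right_of_le inf_le_right
    _ ≤ chowDist A B := chowDist_mono_left inf_le_left

theorem chowDist_sup_sup_le (A B D : Submodule K V) [FiniteDimensional K A]
    [FiniteDimensional K D] : chowDist (A ⊔ D) (B ⊔ D) ≤ chowDist A B :=
  calc chowDist (A ⊔ D) (B ⊔ D)
    _ = chowDist A (B ⊔ D) := chowDist_sup_left_of_le le_sup_right
    _ ≤ chowDist A B := chowDist_anti_right le_sup_left

theorem chow_distance_reduction_le_general (C D L₁ L₂ : Submodule K V) [FiniteDimensional K D]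
    [FiniteDimensional K L₁] :
    chowDist (L₁ ⊓ C ⊔ D) (L₂ ⊓ C ⊔ D) ≤ chowDist L₁ L₂ :=
  calc chowDist (L₁ ⊓ C ⊔ D) (L₂ ⊓ C ⊔ D)
    _ ≤ chowDist (L₁ ⊓ C) (L₂ ⊓ C) := chowDist_sup_sup_le _ _ D
    _ ≤ chowDist L₁ L₂ := chowDist_inf_inf_le L₁ L₂ C

end ChowDist

/-- Symplectic reduction does not increase the Chow distance: for a coisotropic subspace `C`
of a symplectic vector space `V` and Lagrangian subspaces `L₁, L₂`, with the reductions
represented by `Λᵢ = (Lᵢ ⊓ C) ⊔ Cᗮ`, one has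
`dim Λ₁ - dim (Λ₁ ⊓ Λ₂) ≤ dim L₁ - dim (L₁ ⊓ L₂)`. -/
theorem chow_distance_reduction_le
    (V : Type*) [AddCommGroup V] [Module ℝ V] [FiniteDimensional ℝ V]
    (ω : LinearMap.BilinForm ℝ V) (hnd : ω.Nondegenerate) (halt : ω.IsAlt)
    (C : Submodule ℝ V) (hC : ω.orthogonal C ≤ C)
    (L₁ L₂ : Submodule ℝ V) (h₁ : ω.orthogonal L₁ = L₁) (h₂ : ω.orthogonal L₂ = L₂) :
    (finrank ℝ ↥((L₁ ⊓ C) ⊔ ω.orthogonal C) : ℤ) -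
        finrank ℝ ↥(((L₁ ⊓ C) ⊔ ω.orthogonal C) ⊓ ((L₂ ⊓ C) ⊔ ω.orthogonal C)) ≤
      (finrank ℝ L₁ : ℤ) - finrank ℝ ↥(L₁ ⊓ L₂) :=
  chow_distance_reduction_le_general C (ω.orthogonal C) L₁ L₂
end

section
/- Let V be a symplectic vector space and C a coisotropic subspace of V. For every subspace Λ with Cᗮ ⊆ Λ ⊆ C whose image in the reduction C/Cᗮ is Lagrangian (equivalently, Λᗮ ∩ C = Λ), and for every nonnegative integer k with k ≤ dim Cᗮ, there exists a Lagrangian subspace L of V such that (L ∩ C) + Cᗮ = Λ and dim(L ∩ Cᗮ) = k. In other words, the indexed reduction ρ^C_• is surjective onto the set of pairs (Λ, k) with Λ Lagrangian in C/Cᗮ and k ≤ dim Cᗮ. -/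
open Module

/-!
Since `Cᗮ ≤ Λ`, the subspace `Λᗮ` lies in `C`, so the hypothesis on `Λ` makes `Λ` itself Lagrangian
in `V`. Given `W ≤ Cᗮ`, let `A` be a relative complement: `A ⊓ Cᗮ = W` and `A ⊔ Cᗮ = Λ`. If `L` is
a Lagrangian with `L ⊓ Λ = A`, then `L ⊓ C ≤ Aᗮ ⊓ Cᗮᗮ = (A ⊔ Cᗮ)ᗮ = Λ`, so `L ⊓ C = A`; thus `L`
reduces to `Λ` and meets `Cᗮ` exactly in `W`.

Such an `L` exists: take `L` maximal among the isotropic subspaces with `L ⊓ Λ = A`. A vector of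
`Lᗮ` outside `L ⊔ Λ` could be adjoined to `L`, so `Lᗮ ≤ L ⊔ Λ`. Taking orthogonal complements,
`Lᗮ ⊓ Λ ≤ L`, and the modular law gives `Lᗮ = L ⊔ (Lᗮ ⊓ Λ) = L`.
-/

theorem exists_le_finrank_eq {R M : Type*} [Semiring R] [Nontrivial R] [StrongRankCondition R]
    [AddCommMonoid M] [Module R M] {U : Submodule R M} {k : ℕ} (hk : k ≤ finrank R U) :
    ∃ W ≤ U, finrank R W = k := by
  obtain ⟨v, hv⟩ := exists_linearIndependent_of_le_finrank hk
  refine ⟨(Submodule.span R (Set.range v)).map U.subtype, Submodule.map_subtype_le U _, ?_⟩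
  rw [U.finrank_map_subtype_eq, finrank_span_eq_card hv, Fintype.card_fin]

theorem sup_inf_eq_inf_of_disjoint_sup {α : Type*} [Lattice α] [OrderBot α] [IsModularLattice α]
    {a b c : α} (h : Disjoint (a ⊔ b) c) : (a ⊔ c) ⊓ b = a ⊓ b :=
  calc (a ⊔ c) ⊓ b = (a ⊔ c) ⊓ (a ⊔ b) ⊓ b := by
        rw [inf_assoc, inf_eq_right.2 (le_sup_right : b ≤ a ⊔ b)]
    _ = (a ⊔ c ⊓ (a ⊔ b)) ⊓ b := by rw [sup_inf_assoc_of_le c le_sup_left]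
    _ = a ⊓ b := by rw [h.symm.eq_bot, sup_bot_eq]

section CommSemiring

variable {R M : Type*} [CommSemiring R] [AddCommMonoid M] [Module R M] {ω : LinearMap.BilinForm R M}

theorem orthogonal_sup (N P : Submodule R M) :
    ω.orthogonal (N ⊔ P) = ω.orthogonal N ⊓ ω.orthogonal P := by
  refine le_antisymm (le_inf (ω.orthogonal_le le_sup_left) (ω.orthogonal_le le_sup_right)) ?_
  rintro x ⟨hN, hP⟩
  exact sup_le (c := LinearMap.ker (ω.flip x)) hN hP

theorem span_singleton_le_orthogonal_span_singleton (halt : ω.IsAlt) (x : M) :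
    Submodule.span R {x} ≤ ω.orthogonal (Submodule.span R {x}) := by
  rw [Submodule.span_singleton_le_iff_mem]
  intro y hy
  obtain ⟨c, rfl⟩ := Submodule.mem_span_singleton.1 hy
  rw [map_smul, LinearMap.smul_apply, halt.self_eq_zero, smul_zero]

end CommSemiring

theorem sup_span_singleton_le_orthogonal {R M : Type*} [CommRing R] [AddCommGroup M] [Module R M]
    {ω : LinearMap.BilinForm R M} (halt : ω.IsAlt) {L : Submodule R M}
    (hL : L ≤ ω.orthogonal L) {x : M} (hx : x ∈ ω.orthogonal L) :
    L ⊔ Submodule.span R {x} ≤ ω.orthogonal (L ⊔ Submodule.span R {x}) := by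
  have hxL : Submodule.span R {x} ≤ ω.orthogonal L := (Submodule.span_singleton_le_iff_mem x _).2 hx
  have hLx : L ≤ ω.orthogonal (Submodule.span R {x}) :=
    (LinearMap.BilinForm.le_orthogonal_orthogonal halt.isRefl).trans (ω.orthogonal_le hxL)
  rw [orthogonal_sup]
  exact sup_le (le_inf hL hLx) (le_inf hxL (span_singleton_le_orthogonal_span_singleton halt x))

section Field

variable {K V : Type*} [Field K] [AddCommGroup V] [Module K V] {ω : LinearMap.BilinForm K V}

theorem orthogonal_le_sup_of_maximal (halt : ω.IsAlt) {A L M : Submodule K V}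
    (hL : Maximal (fun N ↦ N ≤ ω.orthogonal N ∧ N ⊓ M = A) L) : ω.orthogonal L ≤ L ⊔ M := by
  intro x hx
  by_contra hxLM
  have hdisj : Disjoint (L ⊔ M) (Submodule.span K {x}) :=
    Submodule.disjoint_span_singleton_of_notMem hxLM
  have hle : L ⊔ Submodule.span K {x} ≤ L :=
    hL.le_of_ge ⟨sup_span_singleton_le_orthogonal halt hL.prop.1 hx,
      (sup_inf_eq_inf_of_disjoint_sup hdisj).trans hL.prop.2⟩ le_sup_left
  have hxL : x ∈ L := (le_sup_right.trans hle) (Submodule.mem_span_singleton_self x)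
  exact hxLM (Submodule.mem_sup_left hxL)

variable [FiniteDimensional K V]

theorem orthogonal_eq_self_of_orthogonal_le_sup (hnd : ω.Nondegenerate) (hrefl : ω.IsRefl)
    {L M : Submodule K V} (hL : L ≤ ω.orthogonal L) (hM : ω.orthogonal M = M)
    (hLM : ω.orthogonal L ≤ L ⊔ M) : ω.orthogonal L = L := by
  have hinf : M ⊓ ω.orthogonal L ≤ L :=
    calc M ⊓ ω.orthogonal L = ω.orthogonal (L ⊔ M) := by rw [orthogonal_sup, hM, inf_comm]
      _ ≤ ω.orthogonal (ω.orthogonal L) := ω.orthogonal_le hLM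
      _ = L := LinearMap.BilinForm.orthogonal_orthogonal hnd hrefl L
  calc ω.orthogonal L = (L ⊔ M) ⊓ ω.orthogonal L := (inf_eq_right.2 hLM).symm
    _ = L ⊔ M ⊓ ω.orthogonal L := sup_inf_assoc_of_le M hL
    _ = L := sup_eq_left.2 hinf

theorem exists_lagrangian_inf_eq (hnd : ω.Nondegenerate) (halt : ω.IsAlt) {A M : Submodule K V}
    (hM : ω.orthogonal M = M) (hA : A ≤ M) :
    ∃ L : Submodule K V, ω.orthogonal L = L ∧ L ⊓ M = A := by
  have hAA : A ≤ ω.orthogonal A := hA.trans (hM.symm.le.trans (ω.orthogonal_le hA))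
  obtain ⟨L, hL⟩ := exists_maximal_of_wellFoundedGT
    (fun N ↦ N ≤ ω.orthogonal N ∧ N ⊓ M = A) ⟨A, hAA, inf_eq_left.2 hA⟩
  exact ⟨L, orthogonal_eq_self_of_orthogonal_le_sup hnd halt.isRefl hL.prop.1 hM
    (orthogonal_le_sup_of_maximal halt hL), hL.prop.2⟩

theorem orthogonal_eq_self_of_orthogonal_inf_eq (hnd : ω.Nondegenerate) (hrefl : ω.IsRefl)
    {C Λ : Submodule K V} (hCΛ : ω.orthogonal C ≤ Λ) (hΛ : ω.orthogonal Λ ⊓ C = Λ) :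
    ω.orthogonal Λ = Λ := by
  have hΛC : ω.orthogonal Λ ≤ C :=
    (ω.orthogonal_le hCΛ).trans_eq (LinearMap.BilinForm.orthogonal_orthogonal hnd hrefl C)
  rwa [inf_eq_left.2 hΛC] at hΛ

theorem indexed_reduction_surjective_general (hnd : ω.Nondegenerate) (halt : ω.IsAlt)
    {C Λ W : Submodule K V} (hCΛ : ω.orthogonal C ≤ Λ) (hΛ : ω.orthogonal Λ ⊓ C = Λ)
    (hW : W ≤ ω.orthogonal C) :
    ∃ L : Submodule K V, ω.orthogonal L = L ∧
      (L ⊓ C) ⊔ ω.orthogonal C = Λ ∧ L ⊓ ω.orthogonal C = W := by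
  have hΛΛ : ω.orthogonal Λ = Λ :=
    orthogonal_eq_self_of_orthogonal_inf_eq hnd halt.isRefl hCΛ hΛ
  have hΛC : Λ ≤ C := hΛ ▸ inf_le_right
  obtain ⟨A, hCA_inf, hCA_sup⟩ := IsModularLattice.exists_inf_eq_and_sup_eq hW hCΛ
  have hAΛ : A ≤ Λ := hCA_sup ▸ le_sup_right
  obtain ⟨L, hL, hLΛ⟩ := exists_lagrangian_inf_eq hnd halt hΛΛ hAΛ
  have hAL : A ≤ L := hLΛ ▸ inf_le_left
  have hLCΛ : L ⊓ C ≤ Λ :=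
    calc L ⊓ C ≤ ω.orthogonal A ⊓ ω.orthogonal (ω.orthogonal C) :=
          inf_le_inf (hL.symm.le.trans (ω.orthogonal_le hAL))
            (LinearMap.BilinForm.le_orthogonal_orthogonal halt.isRefl)
      _ = Λ := by rw [← orthogonal_sup, sup_comm, hCA_sup, hΛΛ]
  have hLC : L ⊓ C = A :=
    le_antisymm (hLΛ ▸ le_inf inf_le_left hLCΛ) (le_inf hAL (hAΛ.trans hΛC))
  refine ⟨L, hL, by rw [hLC, sup_comm, hCA_sup], ?_⟩
  calc L ⊓ ω.orthogonal C = L ⊓ C ⊓ ω.orthogonal C := by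
        rw [inf_assoc, inf_eq_right.2 (hCΛ.trans hΛC)]
    _ = W := by rw [hLC, inf_comm, hCA_inf]

end Field

/-- Surjectivity of indexed symplectic reduction: let `C` be a coisotropic subspace of a
symplectic vector space `V`.  For every subspace `Λ` with `Cᗮ ⊆ Λ ⊆ C` whose image in the
reduction `C/Cᗮ` is Lagrangian (equivalently `Λᗮ ⊓ C = Λ`), and every `k ≤ dim Cᗮ`, there is
a Lagrangian subspace `L` of `V` with `(L ⊓ C) ⊔ Cᗮ = Λ` and excess `dim (L ⊓ Cᗮ) = k`. -/
theorem indexed_reduction_surjective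
    (V : Type*) [AddCommGroup V] [Module ℝ V] [FiniteDimensional ℝ V]
    (ω : LinearMap.BilinForm ℝ V) (hnd : ω.Nondegenerate) (halt : ω.IsAlt)
    (C : Submodule ℝ V) (hC : ω.orthogonal C ≤ C)
    (Λ : Submodule ℝ V) (hΛ₁ : ω.orthogonal C ≤ Λ) (hΛ₂ : Λ ≤ C)
    (hΛ : ω.orthogonal Λ ⊓ C = Λ)
    (k : ℕ) (hk : k ≤ finrank ℝ ↥(ω.orthogonal C)) :
    ∃ L : Submodule ℝ V, ω.orthogonal L = L ∧
      (L ⊓ C) ⊔ ω.orthogonal C = Λ ∧ finrank ℝ ↥(L ⊓ ω.orthogonal C) = k := by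
  obtain ⟨W, hW, rfl⟩ := exists_le_finrank_eq hk
  obtain ⟨L, hL, hred, rfl⟩ := indexed_reduction_surjective_general hnd halt hΛ₁ hΛ hW
  exact ⟨L, hL, hred, rfl⟩
end
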